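/- Let θ : ℝⁿ → [−∞,+∞] be a symmetric, proper, lower semicontinuous function, let g = θ∘λ be the associated spectral function, and let X ∈ Sⁿ with θ(λ(X)) finite. Then g is subdifferentially continuous at X if and only if θ is subdifferentially continuous at λ(X). -/

import Mathlib

open Filter Topology Matrix

noncomputable section

namespace SpecPaper

/-! ## Generic variational analysis definitions over a topological real vector space -/

variable {E : Type*}

section Generic

variable [AddCommGroup E] [Module ℝ E] [TopologicalSpace E]

/-- `f x` is finite (neither `+∞` nor `-∞`). -/
def IsFiniteAt (f : E → EReal) (x : E) : Prop :=
  f x ≠ ⊤ ∧ f x ≠ ⊥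

/-- The norm induced by a given inner product. -/
noncomputable def nrm (ip : E → E → ℝ) (x : E) : ℝ :=
  Real.sqrt (ip x x)

/-- The subderivative `df(x)(w)`. -/
noncomputable def subderiv (f : E → EReal) (x w : E) : EReal :=
  Filter.liminf (fun p : ℝ × E => (((p.1)⁻¹ : ℝ) : EReal) * (f (x + p.1 • p.2) - f x))
    ((nhdsWithin (0 : ℝ) (Set.Ioi 0)) ×ˢ nhds w)

/-- The second-order difference quotient `Δ²ₜ f(x,v)(w)`. -/
noncomputable def sdq2 (ip : E → E → ℝ) (f : E → EReal) (x v : E) (t : ℝ) (w : E) : EReal :=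
  (((2 / t ^ 2) : ℝ) : EReal) * (f (x + t • w) - f x - ((t * ip v w : ℝ) : EReal))

/-- The second subderivative `d²f(x,v)(w)`. -/
noncomputable def subderiv2 (ip : E → E → ℝ) (f : E → EReal) (x v w : E) : EReal :=
  Filter.liminf (fun p : ℝ × E => sdq2 ip f x v p.1 p.2)
    ((nhdsWithin (0 : ℝ) (Set.Ioi 0)) ×ˢ nhds w)

/-- Twice epi-differentiability of `f` at `x` for `v`. -/
def TwiceEpiDiff (ip : E → E → ℝ) (f : E → EReal) (x v : E) : Prop :=
  IsFiniteAt f x ∧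
    ∀ t : ℕ → ℝ, (∀ k, 0 < t k) → Tendsto t atTop (nhds 0) →
      ∀ w : E, ∃ ws : ℕ → E, Tendsto ws atTop (nhds w) ∧
        Tendsto (fun k => sdq2 ip f x v (t k) (ws k)) atTop (nhds (subderiv2 ip f x v w))

/-- `v` is a regular subgradient of `f` at `x`. -/
def RegSubgrad (ip : E → E → ℝ) (f : E → EReal) (x v : E) : Prop :=
  IsFiniteAt f x ∧
    (0 : EReal) ≤ Filter.liminf
      (fun y : E =>
        (((nrm ip (y - x))⁻¹ : ℝ) : EReal) * (f y - f x - ((ip v (y - x) : ℝ) : EReal)))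
      (nhdsWithin x {x}ᶜ)

/-- `v` is a (limiting) subgradient of `f` at `x`. -/
def LimSubgrad (ip : E → E → ℝ) (f : E → EReal) (x v : E) : Prop :=
  ∃ xs vs : ℕ → E, (∀ k, RegSubgrad ip f (xs k) (vs k)) ∧
    Tendsto xs atTop (nhds x) ∧ Tendsto vs atTop (nhds v) ∧
    Tendsto (fun k => f (xs k)) atTop (nhds (f x))

/-- The tangent cone to `C` at `x`. -/
def tangentCone (C : Set E) (x : E) : Set E :=
  {w | ∃ (t : ℕ → ℝ) (ws : ℕ → E), (∀ k, 0 < t k) ∧ Tendsto t atTop (nhds 0) ∧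
    Tendsto ws atTop (nhds w) ∧ ∀ k, x + t k • ws k ∈ C}

/-- The regular normal cone to `C` at `x`. -/
def regNormalCone (ip : E → E → ℝ) (C : Set E) (x : E) : Set E :=
  {v | ∀ w ∈ tangentCone C x, ip v w ≤ 0}

/-- The limiting normal cone to `C` at `x`. -/
def limNormalCone (ip : E → E → ℝ) (C : Set E) (x : E) : Set E :=
  {v | ∃ xs vs : ℕ → E, (∀ k, xs k ∈ C) ∧ (∀ k, vs k ∈ regNormalCone ip C (xs k)) ∧
    Tendsto xs atTop (nhds x) ∧ Tendsto vs atTop (nhds v)}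

/-- The critical cone `C_f(x,v)`. -/
def criticalCone (ip : E → E → ℝ) (f : E → EReal) (x v : E) : Set E :=
  {w | subderiv f x w = ((ip v w : ℝ) : EReal)}

/-- `f` is locally Lipschitz continuous at `x` relative to its domain. -/
def LocLipAtRelDom (ip : E → E → ℝ) (f : E → EReal) (x : E) : Prop :=
  IsFiniteAt f x ∧
    ∃ V ∈ nhds x, ∃ ℓ : ℝ, 0 ≤ ℓ ∧
      ∀ a ∈ V, ∀ b ∈ V, f a ≠ ⊤ → f b ≠ ⊤ →
        f a ≠ ⊥ ∧ f b ≠ ⊥ ∧ |(f a).toReal - (f b).toReal| ≤ ℓ * nrm ip (a - b)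

/-- `f` is locally Lipschitz continuous relative to its domain. -/
def LocLipRelDom (ip : E → E → ℝ) (f : E → EReal) : Prop :=
  ∀ x : E, f x ≠ ⊤ → LocLipAtRelDom ip f x

/-- `v` is a proximal subgradient of `f` at `x`. -/
def ProxSubgrad (ip : E → E → ℝ) (f : E → EReal) (x v : E) : Prop :=
  IsFiniteAt f x ∧
    ∃ r > (0 : ℝ), ∃ ε > (0 : ℝ), ∀ x' : E, nrm ip (x' - x) ≤ ε →
      f x + ((ip v (x' - x) - r / 2 * ip (x' - x) (x' - x) : ℝ) : EReal) ≤ f x'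

/-- `f` is prox-regular at `x` for `v`. -/
def ProxRegularAtFor (ip : E → E → ℝ) (f : E → EReal) (x v : E) : Prop :=
  IsFiniteAt f x ∧
    (∃ δ > (0 : ℝ), LowerSemicontinuousOn f {x' | nrm ip (x' - x) < δ}) ∧
    ∃ ε > (0 : ℝ), ∃ r : ℝ, 0 ≤ r ∧
      ∀ x₁ v₁ : E, LimSubgrad ip f x₁ v₁ → nrm ip (x₁ - x) < ε → nrm ip (v₁ - v) < ε →
        f x₁ < f x + (ε : EReal) →
        ∀ x' : E, nrm ip (x' - x) < ε →
          f x₁ + ((ip v₁ (x' - x₁) - r / 2 * ip (x' - x₁) (x' - x₁) : ℝ) : EReal) ≤ f x'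

/-- `f` is prox-regular at `x` (for every subgradient). -/
def ProxRegularAt (ip : E → E → ℝ) (f : E → EReal) (x : E) : Prop :=
  ∀ v : E, LimSubgrad ip f x v → ProxRegularAtFor ip f x v

/-- `f` is subdifferentially continuous at `x`. -/
def SubdiffContAt (ip : E → E → ℝ) (f : E → EReal) (x : E) : Prop :=
  ∀ v : E, LimSubgrad ip f x v →
    ∀ xs vs : ℕ → E, (∀ k, LimSubgrad ip f (xs k) (vs k)) →
      Tendsto xs atTop (nhds x) → Tendsto vs atTop (nhds v) →
      Tendsto (fun k => f (xs k)) atTop (nhds (f x))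

/-- `f` is prox-bounded. -/
def ProxBounded (ip : E → E → ℝ) (f : E → EReal) : Prop :=
  ∃ α c : ℝ, ∀ x : E, (c : EReal) ≤ f x + ((α * ip x x : ℝ) : EReal)

/-- The proximal mapping (as a set of minimizers). -/
def proxSet (ip : E → E → ℝ) (f : E → EReal) (γ : ℝ) (x : E) : Set E :=
  {w | ∀ w' : E,
    f w + ((1 / (2 * γ) * ip (w - x) (w - x) : ℝ) : EReal) ≤
      f w' + ((1 / (2 * γ) * ip (w' - x) (w' - x) : ℝ) : EReal)}

/-- The proximal map of `f` with parameter `γ` is single-valued around `z` and the resulting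
map is directionally differentiable at `z`. -/
def ProxSingleDirDiff (ip : E → E → ℝ) (f : E → EReal) (γ : ℝ) (z : E) : Prop :=
  ∃ V ∈ nhds z, ∃ P : E → E, (∀ u ∈ V, proxSet ip f γ u = {P u}) ∧
    ∀ h : E, ∃ L : E,
      Tendsto (fun t : ℝ => t⁻¹ • (P (z + t • h) - P z)) (nhdsWithin 0 (Set.Ioi 0)) (nhds L)

/-- The parabolic difference quotient. -/
noncomputable def parabQuot (f : E → EReal) (x w : E) (t : ℝ) (z : E) : EReal :=
  (((2 / t ^ 2) : ℝ) : EReal) *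
    (f (x + t • w + (t ^ 2 / 2) • z) - f x - ((t * (subderiv f x w).toReal : ℝ) : EReal))

/-- The parabolic subderivative `d²f(x)(w | z)`. -/
noncomputable def parabSubderiv (f : E → EReal) (x w z : E) : EReal :=
  Filter.liminf (fun p : ℝ × E => parabQuot f x w p.1 p.2)
    ((nhdsWithin (0 : ℝ) (Set.Ioi 0)) ×ˢ nhds z)

/-- `f` is parabolically epi-differentiable at `x` for `w`. -/
def ParabEpiDiff (f : E → EReal) (x w : E) : Prop :=
  (∃ z : E, parabSubderiv f x w z < ⊤) ∧
    ∀ t : ℕ → ℝ, (∀ k, 0 < t k) → Tendsto t atTop (nhds 0) →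
      ∀ z : E, ∃ zs : ℕ → E, Tendsto zs atTop (nhds z) ∧
        Tendsto (fun k => parabQuot f x w (t k) (zs k)) atTop (nhds (parabSubderiv f x w z))

/-- `φ` is a generalized quadratic form: its domain is a linear subspace and on the domain it is
given by a symmetric linear operator. -/
def IsGQF (ip : E → E → ℝ) (φ : E → EReal) : Prop :=
  (φ 0 ≠ ⊤) ∧
  (∀ x y : E, φ x ≠ ⊤ → φ y ≠ ⊤ → φ (x + y) ≠ ⊤) ∧
  (∀ (c : ℝ) (x : E), φ x ≠ ⊤ → φ (c • x) ≠ ⊤) ∧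
  ∃ L : E → E,
    (∀ x y : E, φ x ≠ ⊤ → φ y ≠ ⊤ → L (x + y) = L x + L y) ∧
    (∀ (c : ℝ) (x : E), φ x ≠ ⊤ → L (c • x) = c • L x) ∧
    (∀ x y : E, φ x ≠ ⊤ → φ y ≠ ⊤ → ip (L x) y = ip x (L y)) ∧
    (∀ x : E, φ x ≠ ⊤ → φ x = ((ip (L x) x : ℝ) : EReal))

/-- `f` is generalized twice differentiable at `x` for `v`. -/
def GenTwiceDiff (ip : E → E → ℝ) (f : E → EReal) (x v : E) : Prop :=
  TwiceEpiDiff ip f x v ∧ IsGQF ip (subderiv2 ip f x v)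

/-- Proto-differentiability of a set-valued map `F` at `x` for `y ∈ F x`. -/
def ProtoDiff (F : E → Set E) (x y : E) : Prop :=
  ∀ w η : E, (w, η) ∈ tangentCone {p : E × E | p.2 ∈ F p.1} (x, y) →
    ∀ t : ℕ → ℝ, (∀ k, 0 < t k) → Tendsto t atTop (nhds 0) →
      ∃ ws ηs : ℕ → E, Tendsto ws atTop (nhds w) ∧ Tendsto ηs atTop (nhds η) ∧
        ∀ k, y + t k • ηs k ∈ F (x + t k • ws k)

/-- Relative interior of a set (interior relative to its affine hull). -/
def relInterior (C : Set E) : Set E :=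
  {y | y ∈ C ∧ ∃ V ∈ nhds y, ∀ z ∈ V, z ∈ affineSpan ℝ C → z ∈ C}

/-- A polyhedral set: the intersection of finitely many closed half-spaces. -/
def IsPolyhedral (ip : E → E → ℝ) (C : Set E) : Prop :=
  ∃ (k : ℕ) (a : Fin k → E) (b : Fin k → ℝ), C = {x | ∀ j : Fin k, ip (a j) x ≤ b j}

/-- The subdifferential of a convex function. -/
def convexSubdiff (ip : E → E → ℝ) (f : E → EReal) (x : E) : Set E :=
  {v | ∀ z : E, f x + ((ip v (z - x) : ℝ) : EReal) ≤ f z}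

/-- The natural inner product on `E × ℝ`. -/
def ipProd (ip : E → E → ℝ) : E × ℝ → E × ℝ → ℝ :=
  fun p q => ip p.1 q.1 + p.2 * q.2

/-- The epigraph of `f`. -/
def epiSet (f : E → EReal) : Set (E × ℝ) :=
  {p | f p.1 ≤ (p.2 : EReal)}

/-- `f` is subdifferentially regular at `x`. -/
def SubdiffRegularAt (ip : E → E → ℝ) (f : E → EReal) (x : E) : Prop :=
  IsFiniteAt f x ∧
    regNormalCone (ipProd ip) (epiSet f) (x, (f x).toReal) =
      limNormalCone (ipProd ip) (epiSet f) (x, (f x).toReal)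

/-! Real-valued versions: semidifferentiability, gradients. -/

/-- `f` is semidifferentiable at `x`. -/
def SemiDiffAt (f : E → ℝ) (x : E) : Prop :=
  ∀ w : E, ∃ d : ℝ,
    Tendsto (fun p : ℝ × E => (p.1)⁻¹ * (f (x + p.1 • p.2) - f x))
      ((nhdsWithin (0 : ℝ) (Set.Ioi 0)) ×ˢ nhds w) (nhds d)

/-- The (real value of the) subderivative of a real-valued function. -/
noncomputable def dReal (f : E → ℝ) (x w : E) : ℝ :=
  (subderiv (fun y => ((f y : ℝ) : EReal)) x w).toReal

/-- The second-order difference quotient built from the subderivative. -/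
noncomputable def sdq2R (f : E → ℝ) (x : E) (t : ℝ) (w : E) : ℝ :=
  (2 / t ^ 2) * (f (x + t • w) - f x - t * dReal f x w)

/-- `f` is twice semidifferentiable at `x`. -/
def TwiceSemiDiffAt (f : E → ℝ) (x : E) : Prop :=
  SemiDiffAt f x ∧
    ∀ w : E, ∃ d : ℝ,
      Tendsto (fun p : ℝ × E => sdq2R f x p.1 p.2)
        ((nhdsWithin (0 : ℝ) (Set.Ioi 0)) ×ˢ nhds w) (nhds d)

/-- The second semiderivative `d²f(x)(w)` (the liminf; it is the full limit whenever `f` is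
twice semidifferentiable at `x`). -/
noncomputable def secondSemiDeriv (f : E → ℝ) (x w : E) : EReal :=
  Filter.liminf (fun p : ℝ × E => ((sdq2R f x p.1 p.2 : ℝ) : EReal))
    ((nhdsWithin (0 : ℝ) (Set.Ioi 0)) ×ˢ nhds w)

/-- `f` is (Fréchet) differentiable at `x` with gradient `g` (w.r.t. inner product `ip`). -/
def HasGradAt (ip : E → E → ℝ) (f : E → ℝ) (x g : E) : Prop :=
  Tendsto (fun y : E => (nrm ip (y - x))⁻¹ * (f y - f x - ip g (y - x)))
    (nhdsWithin x {x}ᶜ) (nhds 0)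

/-- `f` is locally Lipschitz continuous around `x`. -/
def LocLipAt (ip : E → E → ℝ) (f : E → ℝ) (x : E) : Prop :=
  ∃ V ∈ nhds x, ∃ ℓ : ℝ, 0 ≤ ℓ ∧ ∀ a ∈ V, ∀ b ∈ V, |f a - f b| ≤ ℓ * nrm ip (a - b)

/-- `f` is twice differentiable at `x` with gradient map `G` near `x` and second derivative
(the derivative of `G` at `x`) given by the linear map `Dxx`. -/
def HasSecondDerivAt (ip : E → E → ℝ) (f : E → EReal) (x : E) (G : E → E) (Dxx : E → E) :
    Prop :=
  ∃ V ∈ nhds x, ∃ fr : E → ℝ,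
    (∀ z ∈ V, f z = ((fr z : ℝ) : EReal)) ∧
    (∀ z ∈ V, HasGradAt ip fr z (G z)) ∧
    IsLinearMap ℝ Dxx ∧
    Tendsto (fun z : E => (nrm ip (z - x))⁻¹ • (G z - G x - Dxx (z - x)))
      (nhdsWithin x {x}ᶜ) (nhds 0)

/-- `f` is twice differentiable at `x`. -/
def TwiceDiffAt (ip : E → E → ℝ) (f : E → EReal) (x : E) : Prop :=
  ∃ G Dxx : E → E, HasSecondDerivAt ip f x G Dxx

end Generic

/-! ## Eigenvalues and spectral machinery -/

open scoped Classical in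
/-- The eigenvalues of a real symmetric matrix, arranged in nonincreasing order
(junk value `0` if the matrix is not symmetric). -/
noncomputable def eigval {n : ℕ} (X : Matrix (Fin n) (Fin n) ℝ) : Fin n → ℝ :=
  if h : X.IsHermitian then
    fun i => h.eigenvalues (Tuple.sort (fun j => -h.eigenvalues j) i)
  else 0

/-- `Oⁿ(X)`: orthogonal matrices realizing the ordered spectral decomposition of `X`. -/
def eigOrth {n : ℕ} (X : Matrix (Fin n) (Fin n) ℝ) : Set (Matrix (Fin n) (Fin n) ℝ) :=
  {U | U * Uᵀ = 1 ∧ X = U * Matrix.diagonal (eigval X) * Uᵀ}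

open scoped Classical in
/-- The block `α_m` of indices `j` whose eigenvalue `λ_j(X)` equals `λ_i(X)`. -/
noncomputable def blockSet {n : ℕ} (X : Matrix (Fin n) (Fin n) ℝ) (i : Fin n) :
    Finset (Fin n) :=
  Finset.univ.filter fun j => eigval X j = eigval X i

lemma mem_blockSet_self {n : ℕ} (X : Matrix (Fin n) (Fin n) ℝ) (i : Fin n) :
    i ∈ blockSet X i := by
  simp [blockSet]

/-- The increasing enumeration of the block of `i`. -/
noncomputable def blockEmb {n : ℕ} (X : Matrix (Fin n) (Fin n) ℝ) (i : Fin n) :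
    Fin (blockSet X i).card → Fin n :=
  fun a => ((blockSet X i).orderIsoOfFin rfl a : Fin n)

/-- The position of `i` inside its own block. -/
noncomputable def blockIdx {n : ℕ} (X : Matrix (Fin n) (Fin n) ℝ) (i : Fin n) :
    Fin (blockSet X i).card :=
  ((blockSet X i).orderIsoOfFin rfl).symm ⟨i, mem_blockSet_self X i⟩

/-- The principal submatrix of `M` corresponding to the block of `i` (for `X`). -/
noncomputable def blockMat {n : ℕ} (X M : Matrix (Fin n) (Fin n) ℝ) (i : Fin n) :
    Matrix (Fin (blockSet X i).card) (Fin (blockSet X i).card) ℝ :=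
  Matrix.of fun a b => M (blockEmb X i a) (blockEmb X i b)

/-- The directional derivative `λ'(X;H)` of the ordered eigenvalue map, computed through
`U ∈ Oⁿ(X)`: blockwise ordered eigenvalues of `U_{α_m}ᵀ H U_{α_m}`. -/
noncomputable def lambdaDir {n : ℕ} (X U H : Matrix (Fin n) (Fin n) ℝ) : Fin n → ℝ :=
  fun i => eigval (blockMat X (Uᵀ * H * U) i) (blockIdx X i)

open scoped Classical in
/-- The Moore–Penrose pseudoinverse of a square real matrix, characterized by the four
Penrose equations. -/
noncomputable def pinv {n : ℕ} (A : Matrix (Fin n) (Fin n) ℝ) :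
    Matrix (Fin n) (Fin n) ℝ :=
  if h : ∃ B : Matrix (Fin n) (Fin n) ℝ,
      A * B * A = A ∧ B * A * B = B ∧ (A * B)ᵀ = A * B ∧ (B * A)ᵀ = B * A
  then h.choose else 0

/-- The curvature term `2 ∑ₘ ⟨Diag(y)_{αₘαₘ}, U_{αₘ}ᵀ H (μₘ I - X)† H U_{αₘ}⟩`, written as a
single sum over all indices. -/
noncomputable def curvTerm {n : ℕ} (X U H : Matrix (Fin n) (Fin n) ℝ) (y : Fin n → ℝ) : ℝ :=
  2 * ∑ i : Fin n, y i *
    (Uᵀ * (H * pinv (eigval X i • (1 : Matrix (Fin n) (Fin n) ℝ) - X) * H) * U) i i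

/-- Two symmetric matrices admit a simultaneous ordered spectral decomposition. -/
def simOrdSpec {k : ℕ} (A B : Matrix (Fin k) (Fin k) ℝ) : Prop :=
  ∃ P : Matrix (Fin k) (Fin k) ℝ, P * Pᵀ = 1 ∧
    A = P * Matrix.diagonal (eigval A) * Pᵀ ∧
    B = P * Matrix.diagonal (eigval B) * Pᵀ

/-- The subspace of symmetric `n × n` real matrices. -/
def symSubmodule (n : ℕ) : Submodule ℝ (Matrix (Fin n) (Fin n) ℝ) where
  carrier := {A | A.IsSymm}
  add_mem' := by
    intro a b ha hb
    simp only [Set.mem_setOf_eq, Matrix.IsSymm] at *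
    rw [Matrix.transpose_add, ha, hb]
  zero_mem' := by
    simp only [Set.mem_setOf_eq, Matrix.IsSymm, Matrix.transpose_zero]
  smul_mem' := by
    intro c a ha
    simp only [Set.mem_setOf_eq, Matrix.IsSymm] at *
    rw [Matrix.transpose_smul, ha]

/-- The space `Sⁿ` of symmetric `n × n` real matrices. -/
abbrev Sym (n : ℕ) : Type := ↥(symSubmodule n)

/-- The trace inner product `⟨A, B⟩ = tr(AB)` on `Sⁿ`. -/
noncomputable def ipM {n : ℕ} (A B : Sym n) : ℝ :=
  ((A : Matrix (Fin n) (Fin n) ℝ) * (B : Matrix (Fin n) (Fin n) ℝ)).trace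

/-- The Euclidean inner product on `ℝⁿ`. -/
def ipV {n : ℕ} (v w : Fin n → ℝ) : ℝ :=
  ∑ i, v i * w i

/-- The spectral function `g = θ ∘ λ` on `Sⁿ`. -/
noncomputable def specFn {n : ℕ} (θ : (Fin n → ℝ) → EReal) : Sym n → EReal :=
  fun A => θ (eigval (A : Matrix (Fin n) (Fin n) ℝ))

/-- A function on `ℝⁿ` is symmetric (permutation invariant). -/
def SymmetricFn {n : ℕ} {α : Type*} (θ : (Fin n → ℝ) → α) : Prop :=
  ∀ (x : Fin n → ℝ) (σ : Equiv.Perm (Fin n)), θ (fun i => x (σ i)) = θ x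

/-- The diagonal matrix `Diag(w)` as an element of `Sⁿ`. -/
noncomputable def diagSym {n : ℕ} (w : Fin n → ℝ) : Sym n :=
  ⟨Matrix.diagonal w, Matrix.isSymm_diagonal w⟩

/-- The `i`-th order statistic: `orderStat x i` is the `i`-th largest entry of `x`. -/
noncomputable def orderStat {n : ℕ} (x : Fin n → ℝ) : Fin n → ℝ :=
  fun i => x (Tuple.sort (fun j => -x j) i)

/-!
For an orthogonal matrix `U`, the isometry `x ↦ U Diag(x) Uᵀ` carries `θ` to `g = θ ∘ λ`, and it
matches the subgradients of the two functions. Birkhoff's theorem gives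
`⟨U Diag(z) Uᵀ, Z⟩ ≤ ⟨z, λ(Z)⟩` whenever `z` is nonincreasing. If the pairs `(xᵢ, yᵢ)` are sorted
lexicographically, this applies to both `z = x` and `z = x + δ y` for small `δ > 0`, so that
`⟨U Diag(y) Uᵀ, Z⟩ - ⟨y, λ(Z)⟩` is at most a multiple of `‖Z - U Diag(x) Uᵀ‖²`; this turns a
regular subgradient `y` of `θ` at `x` into a regular subgradient of `g`. Conversely, `g` is
constant along the curves `exp(tK) X exp(-tK)` with `K` skew-symmetric; hence a regular subgradient
of `g` at `X` commutes with `X`, and the two are diagonalized by the same `U`. Compactness of the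
orthogonal group passes this description to limiting subgradients and then to convergent
sequences of pairs `(Xₖ, Vₖ)`.
-/

/-- `ip` is an inner product on `E` that is jointly continuous for the given topology. The
inner products of the variational notions above are bare functions; this records their laws. -/
structure IsInnerProduct [AddCommGroup E] [Module ℝ E] [TopologicalSpace E]
    (ip : E → E → ℝ) : Prop where
  symm : ∀ x y, ip x y = ip y x
  add_left : ∀ x y z, ip (x + y) z = ip x z + ip y z
  smul_left : ∀ (c : ℝ) (x y : E), ip (c • x) y = c * ip x y
  pos : ∀ x, x ≠ 0 → 0 < ip x x
  continuous_uncurry : Continuous fun p : E × E => ip p.1 p.2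

lemma nrm_nonneg (ip : E → E → ℝ) (x : E) : 0 ≤ nrm ip x :=
  Real.sqrt_nonneg _

namespace IsInnerProduct

variable [AddCommGroup E] [Module ℝ E] [TopologicalSpace E] {ip : E → E → ℝ}

lemma smul_right (hip : IsInnerProduct ip) (c : ℝ) (x y : E) : ip x (c • y) = c * ip x y := by
  rw [hip.symm, hip.smul_left, hip.symm]

lemma zero_right (hip : IsInnerProduct ip) (x : E) : ip x 0 = 0 := by
  simpa only [zero_smul, zero_mul] using hip.smul_right 0 x 0

lemma sub_left (hip : IsInnerProduct ip) (x y z : E) : ip (x - y) z = ip x z - ip y z := by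
  rw [eq_sub_iff_add_eq, ← hip.add_left, sub_add_cancel]

lemma sub_right (hip : IsInnerProduct ip) (x y z : E) : ip x (y - z) = ip x y - ip x z := by
  rw [hip.symm, hip.sub_left, hip.symm y, hip.symm z]

lemma self_nonneg (hip : IsInnerProduct ip) (x : E) : 0 ≤ ip x x := by
  rcases eq_or_ne x 0 with rfl | hx
  · rw [hip.zero_right]
  · exact (hip.pos x hx).le

lemma nrm_sq (hip : IsInnerProduct ip) (x : E) : nrm ip x ^ 2 = ip x x :=
  Real.sq_sqrt (hip.self_nonneg x)

lemma nrm_sub_sq (hip : IsInnerProduct ip) (x y : E) :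
    nrm ip (x - y) ^ 2 = ip x x - 2 * ip x y + ip y y := by
  rw [hip.nrm_sq, hip.sub_left, hip.sub_right, hip.sub_right, hip.symm y x]
  ring

lemma nrm_zero (hip : IsInnerProduct ip) : nrm ip 0 = 0 := by
  rw [nrm, hip.zero_right, Real.sqrt_zero]

lemma nrm_pos (hip : IsInnerProduct ip) {x : E} (hx : x ≠ 0) : 0 < nrm ip x :=
  Real.sqrt_pos.2 (hip.pos x hx)

lemma nrm_smul (hip : IsInnerProduct ip) {c : ℝ} (hc : 0 ≤ c) (x : E) :
    nrm ip (c • x) = c * nrm ip x := by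
  rw [nrm, hip.smul_left, hip.smul_right, ← mul_assoc, Real.sqrt_mul (mul_self_nonneg c),
    Real.sqrt_mul_self hc, nrm]

lemma continuous_nrm (hip : IsInnerProduct ip) : Continuous (nrm ip) :=
  Real.continuous_sqrt.comp (hip.continuous_uncurry.comp (continuous_id.prodMk continuous_id))

lemma tendsto_nrm_sub [ContinuousSub E] (hip : IsInnerProduct ip) (x : E) :
    Tendsto (fun y => nrm ip (y - x)) (𝓝 x) (𝓝 0) := by
  simpa only [Function.comp_def, sub_self, hip.nrm_zero] using
    (hip.continuous_nrm.comp (continuous_sub_right x)).tendsto x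

end IsInnerProduct

lemma coe_le_coe_inv_mul_sub_sub_iff {N : ℝ} (hN : 0 < N) (c r s : ℝ) (a : EReal) :
    (c : EReal) ≤ ((N⁻¹ : ℝ) : EReal) * (a - r - s) ↔
      (r : EReal) + ((s + c * N : ℝ) : EReal) ≤ a := by
  induction a with
  | bot =>
    rw [EReal.bot_sub, EReal.bot_sub, EReal.coe_mul_bot_of_pos (inv_pos.2 hN), le_bot_iff,
      le_bot_iff, ← EReal.coe_add]
    exact iff_of_false (EReal.coe_ne_bot _) (EReal.coe_ne_bot _)
  | top =>
    rw [EReal.top_sub_coe, EReal.top_sub_coe, EReal.coe_mul_top_of_pos (inv_pos.2 hN)]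
    exact iff_of_true le_top le_top
  | coe a =>
    rw [← EReal.coe_sub, ← EReal.coe_sub, ← EReal.coe_mul, EReal.coe_le_coe_iff,
      ← EReal.coe_add, EReal.coe_le_coe_iff, le_inv_mul_iff₀ hN, le_sub_iff_add_le,
      le_sub_iff_add_le]
    constructor <;> intro h <;> linarith

section RegularSubgradients

variable [AddCommGroup E] [Module ℝ E] [TopologicalSpace E] {ip : E → E → ℝ} {f : E → EReal}
  {x v : E}

lemma regSubgrad_iff_eventually (hip : IsInnerProduct ip) :
    RegSubgrad ip f x v ↔ IsFiniteAt f x ∧ ∀ ε > 0, ∀ᶠ y in 𝓝 x,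
      f x + ((ip v (y - x) - ε * nrm ip (y - x) : ℝ) : EReal) ≤ f y := by
  refine and_congr_right fun hx => ?_
  obtain ⟨r, hr⟩ : ∃ r : ℝ, f x = r := ⟨_, (EReal.coe_toReal hx.1 hx.2).symm⟩
  have quotient_ge_iff (c : ℝ) :
      (∀ᶠ y in 𝓝[{x}ᶜ] x, (c : EReal) ≤
        ((nrm ip (y - x))⁻¹ : ℝ) * (f y - f x - (ip v (y - x) : ℝ))) ↔
      ∀ᶠ y in 𝓝 x, f x + ((ip v (y - x) + c * nrm ip (y - x) : ℝ) : EReal) ≤ f y := by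
    rw [eventually_nhdsWithin_iff]
    refine eventually_congr (.of_forall fun y => ?_)
    rcases eq_or_ne y x with rfl | hy
    · simp [hip.zero_right, hip.nrm_zero]
    · rw [hr, coe_le_coe_inv_mul_sub_sub_iff (hip.nrm_pos (sub_ne_zero.2 hy))]
      simp [hy]
  rw [le_liminf_iff']
  constructor
  · intro h ε hε
    have hneg : ((-ε : ℝ) : EReal) < 0 := by exact_mod_cast neg_lt_zero.2 hε
    simpa only [neg_mul, ← sub_eq_add_neg] using (quotient_ge_iff (-ε)).1 (h _ hneg)
  · intro h c hc
    obtain ⟨d, hcd, hd⟩ := EReal.lt_iff_exists_real_btwn.1 hc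
    have hd' : 0 < -d := neg_pos.2 (by exact_mod_cast hd)
    have := (quotient_ge_iff d).2 (by simpa only [neg_mul, sub_neg_eq_add] using h (-d) hd')
    exact this.mono fun y hy => hcd.le.trans hy

lemma RegSubgrad.comp_isometry {F : Type*} [AddCommGroup F] [Module ℝ F] [TopologicalSpace F]
    {ip' : F → F → ℝ} (hip : IsInnerProduct ip) (hip' : IsInnerProduct ip') {L : E →L[ℝ] F}
    (hL : ∀ a b, ip' (L a) (L b) = ip a b) {f : F → EReal}
    (h : RegSubgrad ip' f (L x) (L v)) : RegSubgrad ip (f ∘ L) x v := by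
  rw [regSubgrad_iff_eventually hip'] at h
  rw [regSubgrad_iff_eventually hip]
  refine ⟨h.1, fun ε hε => ?_⟩
  simpa only [Function.comp_apply, nrm, ← map_sub, hL] using
    L.continuous.continuousAt.eventually (h.2 ε hε)

/-- The subgradient inequality, divided by `t`, passes to the limit along the curve. -/
lemma RegSubgrad.ip_nonpos_of_tendsto [IsTopologicalAddGroup E] [ContinuousSMul ℝ E]
    (hip : IsInnerProduct ip) (h : RegSubgrad ip f x v) {γ : ℝ → E} {w : E}
    (hγ : Tendsto (fun t => t⁻¹ • (γ t - x)) (𝓝[>] 0) (𝓝 w)) (hf : ∀ t, f (γ t) ≤ f x) :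
    ip v w ≤ 0 := by
  obtain ⟨⟨hx_top, hx_bot⟩, hev⟩ := (regSubgrad_iff_eventually hip).1 h
  have hpos : ∀ᶠ t : ℝ in 𝓝[>] 0, 0 < t := self_mem_nhdsWithin
  have hγx : Tendsto γ (𝓝[>] 0) (𝓝 x) := by
    have hlim : Tendsto (fun t : ℝ => t • t⁻¹ • (γ t - x) + x) (𝓝[>] 0) (𝓝 ((0 : ℝ) • w + x)) :=
      ((tendsto_nhdsWithin_of_tendsto_nhds tendsto_id).smul hγ).add tendsto_const_nhds
    rw [zero_smul, zero_add] at hlim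
    refine hlim.congr' (hpos.mono fun t ht => ?_)
    rw [smul_inv_smul₀ ht.ne', sub_add_cancel]
  have bound (ε : ℝ) (hε : 0 < ε) : ip v w ≤ ε * nrm ip w := by
    refine le_of_tendsto_of_tendsto
      ((hip.continuous_uncurry.tendsto (v, w)).comp (tendsto_const_nhds.prodMk_nhds hγ))
      (((hip.continuous_nrm.tendsto w).comp hγ).const_mul ε) ?_
    filter_upwards [hpos, hγx.eventually (hev ε hε)] with t ht hle
    have hreal : ip v (γ t - x) ≤ ε * nrm ip (γ t - x) := by
      have hle' := hle.trans (hf t)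
      rw [← EReal.coe_toReal hx_top hx_bot, ← EReal.coe_add, EReal.coe_le_coe_iff] at hle'
      linarith
    have ht' : 0 ≤ t⁻¹ := inv_nonneg.2 ht.le
    calc ip v (t⁻¹ • (γ t - x)) = t⁻¹ * ip v (γ t - x) := hip.smul_right ..
      _ ≤ t⁻¹ * (ε * nrm ip (γ t - x)) := mul_le_mul_of_nonneg_left hreal ht'
      _ = ε * nrm ip (t⁻¹ • (γ t - x)) := by rw [hip.nrm_smul ht', mul_left_comm]
  have hlim : Tendsto (fun ε : ℝ => ε * nrm ip w) (𝓝[>] 0) (𝓝 (0 * nrm ip w)) :=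
    (tendsto_nhdsWithin_of_tendsto_nhds tendsto_id).mul_const _
  rw [zero_mul] at hlim
  exact ge_of_tendsto hlim (eventually_nhdsWithin_of_forall bound)

end RegularSubgradients

section Transport

variable [AddCommGroup E] [TopologicalSpace E] {F : Type*} [AddCommGroup F]
  [TopologicalSpace F] {ip : E → E → ℝ} {ip' : F → F → ℝ} {f : E → EReal}
  {g : F → EReal} {L : E → F}

lemma LimSubgrad.map (hL : Continuous L) (hgL : ∀ x, g (L x) = f x)
    (hreg : ∀ {x v}, RegSubgrad ip f x v → RegSubgrad ip' g (L x) (L v)) {x v : E}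
    (h : LimSubgrad ip f x v) : LimSubgrad ip' g (L x) (L v) := by
  obtain ⟨xs, vs, hxv, hx, hv, hfx⟩ := h
  refine ⟨L ∘ xs, L ∘ vs, fun k => hreg (hxv k), (hL.tendsto x).comp hx,
    (hL.tendsto v).comp hv, ?_⟩
  simpa only [Function.comp_apply, hgL] using hfx

lemma SubdiffContAt.of_map (hL : Continuous L) (hgL : ∀ x, g (L x) = f x)
    (hreg : ∀ {x v}, RegSubgrad ip f x v → RegSubgrad ip' g (L x) (L v)) {x : E}
    (h : SubdiffContAt ip' g (L x)) : SubdiffContAt ip f x := by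
  intro v hv xs vs hxv hx hvs
  have := h (L v) (hv.map hL hgL hreg) (L ∘ xs) (L ∘ vs) (fun k => (hxv k).map hL hgL hreg)
    ((hL.tendsto x).comp hx) ((hL.tendsto v).comp hvs)
  simpa only [Function.comp_apply, hgL] using this

end Transport

section Rearrangement

variable {ι : Type*}

lemma exists_perm_antitone_comp {n : ℕ} {α : Type*} [LinearOrder α] (f : Fin n → α) :
    ∃ σ : Equiv.Perm (Fin n), Antitone (f ∘ σ) :=
  ⟨Tuple.sort (OrderDual.toDual ∘ f), Tuple.monotone_sort (OrderDual.toDual ∘ f)⟩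

lemma eventually_antitone_add_smul [Finite ι] [Preorder ι] {x y : ι → ℝ}
    (h : Antitone fun i => toLex (x i, y i)) : ∀ᶠ δ in 𝓝[>] (0 : ℝ), Antitone (x + δ • y) := by
  suffices ∀ i j, i ≤ j → ∀ᶠ δ in 𝓝[>] (0 : ℝ), x j + δ * y j ≤ x i + δ * y i by
    have hall := eventually_all.2 fun i => eventually_all.2 fun j =>
      eventually_imp_distrib_left.2 (this i j)
    exact hall.mono fun δ hδ i j hij => hδ i j hij
  intro i j hij
  rcases Prod.Lex.toLex_le_toLex.1 (h hij) with hlt | ⟨heq, hle⟩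
  · have htendsto (k : ι) : Tendsto (fun δ : ℝ => x k + δ * y k) (𝓝[>] 0) (𝓝 (x k)) :=
      tendsto_nhdsWithin_of_tendsto_nhds (Continuous.tendsto' (by fun_prop) _ _ (by simp))
    exact ((htendsto j).eventually_lt (htendsto i) hlt).mono fun _ => le_of_lt
  · filter_upwards [self_mem_nhdsWithin] with δ hδ
    exact add_le_add heq.le (mul_le_mul_of_nonneg_left hle (le_of_lt hδ))

variable [Fintype ι] [DecidableEq ι]

lemma exists_perm_forall_ne_zero_of_det_ne_zero {R : Type*} [CommRing R] {W : Matrix ι ι R}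
    (hW : W.det ≠ 0) : ∃ σ : Equiv.Perm ι, ∀ i, W (σ i) i ≠ 0 := by
  rw [det_apply] at hW
  obtain ⟨σ, -, hσ⟩ := Finset.exists_ne_zero_of_sum_ne_zero hW
  refine ⟨σ, fun i hi => hσ ?_⟩
  rw [Finset.prod_eq_zero (f := fun i => W (σ i) i) (Finset.mem_univ i) hi, smul_zero]

lemma hadamard_self_mem_doublyStochastic {Q : Matrix ι ι ℝ} (hQ : Q ∈ orthogonalGroup ι ℝ) :
    Q ⊙ Q ∈ doublyStochastic ℝ ι := by
  refine mem_doublyStochastic_iff_sum.2 ⟨fun i j => mul_self_nonneg _, fun i => ?_, fun j => ?_⟩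
  · simpa only [hadamard_apply, mul_apply, transpose_apply, one_apply_eq] using
      congrFun₂ (mem_orthogonalGroup_iff _ _ |>.1 hQ) i i
  · simpa only [hadamard_apply, mul_apply, transpose_apply, one_apply_eq] using
      congrFun₂ (mem_orthogonalGroup_iff' _ _ |>.1 hQ) j j

/-- By Birkhoff's theorem it suffices to check permutation matrices, where this is the
rearrangement inequality. -/
lemma dotProduct_mulVec_le_of_mem_doublyStochastic {x z : ι → ℝ} (hxz : Monovary x z)
    {D : Matrix ι ι ℝ} (hD : D ∈ doublyStochastic ℝ ι) : x ⬝ᵥ D *ᵥ z ≤ x ⬝ᵥ z := by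
  have hconvex : Convex ℝ {D : Matrix ι ι ℝ | x ⬝ᵥ D *ᵥ z ≤ x ⬝ᵥ z} :=
    convex_halfSpace_le ⟨fun A B => by rw [add_mulVec, dotProduct_add],
      fun c A => by rw [smul_mulVec, dotProduct_smul]⟩ _
  rw [← SetLike.mem_coe, doublyStochastic_eq_convexHull_permMatrix] at hD
  refine convexHull_min ?_ hconvex hD
  rintro _ ⟨σ, rfl⟩
  change x ⬝ᵥ σ.permMatrix ℝ *ᵥ z ≤ x ⬝ᵥ z
  rw [permMatrix_mulVec]
  exact hxz.sum_mul_comp_perm_le_sum_mul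

end Rearrangement

section InnerProducts

variable {n : ℕ}

lemma ipV_eq_dotProduct (v w : Fin n → ℝ) : ipV v w = v ⬝ᵥ w :=
  rfl

lemma isInnerProduct_ipV : IsInnerProduct (ipV (n := n)) where
  symm := dotProduct_comm
  add_left := add_dotProduct
  smul_left := smul_dotProduct
  pos x hx := by simpa [ipV_eq_dotProduct] using dotProduct_star_self_pos_iff.2 hx
  continuous_uncurry := by unfold ipV; fun_prop

lemma isHermitian_coe_sym (A : Sym n) : (A : Matrix (Fin n) (Fin n) ℝ).IsHermitian :=
  (conjTranspose_eq_transpose_of_trivial _).trans A.2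

lemma trace_mul_conjTranspose_self_pos {m k : Type*} [Fintype m] [Fintype k] {A : Matrix m k ℝ}
    (hA : A ≠ 0) : 0 < (A * Aᴴ).trace :=
  (posSemidef_self_mul_conjTranspose A).trace_nonneg.lt_of_ne'
    (mt trace_mul_conjTranspose_self_eq_zero_iff.1 hA)

lemma isInnerProduct_ipM : IsInnerProduct (ipM (n := n)) where
  symm A B := trace_mul_comm A.1 B.1
  add_left A B C := by simp [ipM, add_mul]
  smul_left c A B := by simp [ipM]
  pos A hA := by
    have hpos := trace_mul_conjTranspose_self_pos (A := A.1) (by simpa using hA)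
    rwa [(isHermitian_coe_sym A).eq] at hpos
  continuous_uncurry := by unfold ipM; fun_prop

end InnerProducts

section ConjDiag

variable {n : ℕ}

/-- The symmetric matrix `U Diag(x) Uᵀ` for an orthogonal `U`, bundled as a continuous linear map
in `x`: the isometry along which a symmetric function and its spectral function correspond. -/
def conjDiag (U : orthogonalGroup (Fin n) ℝ) : (Fin n → ℝ) →L[ℝ] Sym n where
  toFun x := ⟨U.1 * diagonal x * U.1ᵀ, by
    change (U.1 * diagonal x * U.1ᵀ)ᵀ = _
    simp only [transpose_mul, transpose_transpose, diagonal_transpose, mul_assoc]⟩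
  map_add' x y := by ext1; simp [← mul_add, ← add_mul, diagonal_add, Pi.add_def]
  map_smul' c x := by ext1; simp [diagonal_smul]
  cont := by fun_prop

lemma coe_conjDiag (U : orthogonalGroup (Fin n) ℝ) (x : Fin n → ℝ) :
    (conjDiag U x : Matrix (Fin n) (Fin n) ℝ) = U.1 * diagonal x * U.1ᵀ :=
  rfl

lemma transpose_coe_mul_self (U : orthogonalGroup (Fin n) ℝ) : U.1ᵀ * U.1 = 1 :=
  (mem_orthogonalGroup_iff' _ _).1 U.2

lemma coe_mul_transpose_self (U : orthogonalGroup (Fin n) ℝ) : U.1 * U.1ᵀ = 1 :=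
  (mem_orthogonalGroup_iff _ _).1 U.2

lemma coe_conjDiag_mul (U : orthogonalGroup (Fin n) ℝ) (x : Fin n → ℝ) :
    (conjDiag U x : Matrix (Fin n) (Fin n) ℝ) * U.1 = U.1 * diagonal x := by
  rw [coe_conjDiag, mul_assoc, transpose_coe_mul_self, mul_one]

lemma eq_conjDiag_of_mul_eq {U : orthogonalGroup (Fin n) ℝ} {X : Sym n} {x : Fin n → ℝ}
    (h : X.1 * U.1 = U.1 * diagonal x) : X = conjDiag U x := by
  ext1
  rw [coe_conjDiag, ← h, mul_assoc, coe_mul_transpose_self, mul_one]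

lemma diag_transpose_mul_conjDiag_mul (U : orthogonalGroup (Fin n) ℝ) (x : Fin n → ℝ) :
    (U.1ᵀ * (conjDiag U x).1 * U.1).diag = x := by
  rw [mul_assoc, coe_conjDiag_mul, ← mul_assoc, transpose_coe_mul_self, one_mul, diag_diagonal]

lemma continuous_conjDiag :
    Continuous fun p : orthogonalGroup (Fin n) ℝ × (Fin n → ℝ) => conjDiag p.1 p.2 :=
  Continuous.subtype_mk (by fun_prop) _

lemma ipM_conjDiag_conjDiag (U W : orthogonalGroup (Fin n) ℝ) (x z : Fin n → ℝ) :
    ipM (conjDiag U x) (conjDiag W z) =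
      x ⬝ᵥ ((star U * W).1 ⊙ (star U * W).1) *ᵥ z := by
  rw [dotProduct_mulVec, dotProduct_vecMul_hadamard, ipM, coe_conjDiag, coe_conjDiag,
    mul_assoc, mul_assoc, trace_mul_comm]
  simp [star_eq_conjTranspose, mul_assoc]

lemma ipM_conjDiag_conjDiag_self (U : orthogonalGroup (Fin n) ℝ) (x y : Fin n → ℝ) :
    ipM (conjDiag U x) (conjDiag U y) = ipV x y := by
  rw [ipM_conjDiag_conjDiag, Unitary.star_mul_self, OneMemClass.coe_one, hadamard_one]
  simp [ipV_eq_dotProduct]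

lemma exists_conjDiag_comp_perm_eq (U : orthogonalGroup (Fin n) ℝ) (σ : Equiv.Perm (Fin n)) :
    ∃ W, ∀ x, conjDiag W (x ∘ σ) = conjDiag U x := by
  refine ⟨⟨U.1.submatrix id σ, (mem_orthogonalGroup_iff _ _).2 ?_⟩, fun x => ?_⟩
  · rw [transpose_submatrix, submatrix_mul_equiv, coe_mul_transpose_self, submatrix_id_id]
  · ext1
    change U.1.submatrix id σ * diagonal (x ∘ σ) * (U.1.submatrix id σ)ᵀ = _
    rw [coe_conjDiag, ← submatrix_diagonal_equiv, transpose_submatrix,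
      submatrix_mul_equiv, submatrix_mul_equiv, submatrix_id_id]

/-- `Q := Wᵀ U` intertwines the two diagonal matrices, so `x i = z (σ i)` wherever `Q (σ i) i ≠ 0`;
a nonvanishing term of the Leibniz expansion of `det Q` provides `σ`. -/
lemma exists_perm_forall_conjDiag_eq_imp (U W : orthogonalGroup (Fin n) ℝ) :
    ∃ σ : Equiv.Perm (Fin n), ∀ x z, conjDiag U x = conjDiag W z → x = z ∘ σ := by
  have hdet : (W.1ᵀ * U.1).det ≠ 0 := by
    rw [det_mul]
    exact mul_ne_zero (det_ne_zero_of_right_inverse (transpose_coe_mul_self W))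
      (det_ne_zero_of_left_inverse (transpose_coe_mul_self U))
  obtain ⟨σ, hσ⟩ := exists_perm_forall_ne_zero_of_det_ne_zero hdet
  refine ⟨σ, fun x z hxz => funext fun i => mul_left_cancel₀ (hσ i) ?_⟩
  have intertwine : W.1ᵀ * U.1 * diagonal x = diagonal z * (W.1ᵀ * U.1) := by
    rw [mul_assoc, ← coe_conjDiag_mul, hxz, coe_conjDiag]
    simp only [← mul_assoc, transpose_coe_mul_self, one_mul]
  simpa only [mul_diagonal, diagonal_mul, mul_comm, Function.comp_apply] using
    congrFun₂ intertwine (σ i) i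

lemma antitone_eigval (X : Sym n) : Antitone (eigval X.1) := by
  rw [eigval, dif_pos (isHermitian_coe_sym X)]
  intro i j hij
  exact neg_le_neg_iff.1 (Tuple.monotone_sort (fun j => -_) hij)

lemma exists_eq_conjDiag_eigval (X : Sym n) : ∃ U, X = conjDiag U (eigval X.1) := by
  have hX := isHermitian_coe_sym X
  have hspec : X = conjDiag hX.eigenvectorUnitary hX.eigenvalues := Subtype.ext hX.spectral_theorem
  obtain ⟨W, hW⟩ := exists_conjDiag_comp_perm_eq hX.eigenvectorUnitary
    (Tuple.sort fun j => -hX.eigenvalues j)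
  refine ⟨W, ?_⟩
  rw [eigval, dif_pos hX]
  exact hspec.trans (hW _).symm

lemma specFn_conjDiag {θ : (Fin n → ℝ) → EReal} (hθ : SymmetricFn θ)
    (U : orthogonalGroup (Fin n) ℝ) (x : Fin n → ℝ) : specFn θ (conjDiag U x) = θ x := by
  obtain ⟨W, hW⟩ := exists_eq_conjDiag_eigval (conjDiag U x)
  obtain ⟨σ, hσ⟩ := exists_perm_forall_conjDiag_eq_imp U W
  calc specFn θ (conjDiag U x) = θ (eigval (conjDiag U x).1 ∘ σ) := (hθ _ σ).symm
    _ = θ x := by rw [← hσ x _ hW]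

end ConjDiag

section EigenvalueInequalities

variable {n : ℕ}

lemma ipM_conjDiag_le_ipV_eigval (U : orthogonalGroup (Fin n) ℝ) {x : Fin n → ℝ}
    (hx : Antitone x) (Z : Sym n) : ipM (conjDiag U x) Z ≤ ipV x (eigval Z.1) := by
  obtain ⟨W, hW⟩ := exists_eq_conjDiag_eigval Z
  calc ipM (conjDiag U x) Z
      = x ⬝ᵥ ((star U * W).1 ⊙ (star U * W).1) *ᵥ eigval Z.1 := by
        rw [← ipM_conjDiag_conjDiag, ← hW]
    _ ≤ x ⬝ᵥ eigval Z.1 := dotProduct_mulVec_le_of_mem_doublyStochastic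
        (hx.monovary (antitone_eigval Z)) (hadamard_self_mem_doublyStochastic (star U * W).2)

lemma nrm_sub_conjDiag_sq (U : orthogonalGroup (Fin n) ℝ) (x : Fin n → ℝ) (Z : Sym n) :
    nrm ipM (Z - conjDiag U x) ^ 2 =
      nrm ipV (eigval Z.1 - x) ^ 2 + 2 * (ipV x (eigval Z.1) - ipM (conjDiag U x) Z) := by
  have hZ : ipM Z Z = ipV (eigval Z.1) (eigval Z.1) := by
    obtain ⟨W, hW⟩ := exists_eq_conjDiag_eigval Z
    rw [← ipM_conjDiag_conjDiag_self W, ← hW]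
  rw [isInnerProduct_ipM.nrm_sub_sq, isInnerProduct_ipV.nrm_sub_sq, hZ,
    ipM_conjDiag_conjDiag_self, isInnerProduct_ipM.symm Z,
    isInnerProduct_ipV.symm (eigval _) x]
  ring

lemma nrm_eigval_sub_le (U : orthogonalGroup (Fin n) ℝ) {x : Fin n → ℝ} (hx : Antitone x)
    (Z : Sym n) : nrm ipV (eigval Z.1 - x) ≤ nrm ipM (Z - conjDiag U x) := by
  refine (sq_le_sq₀ (nrm_nonneg _ _) (nrm_nonneg _ _)).1 ?_
  linarith [nrm_sub_conjDiag_sq U x Z, ipM_conjDiag_le_ipV_eigval U hx Z]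

lemma two_mul_ipM_conjDiag_sub_ipV_eigval_le (U : orthogonalGroup (Fin n) ℝ) {x y : Fin n → ℝ}
    {δ : ℝ} (hxy : Antitone (x + δ • y)) (Z : Sym n) :
    2 * (δ * (ipM (conjDiag U y) Z - ipV y (eigval Z.1))) ≤ nrm ipM (Z - conjDiag U x) ^ 2 := by
  have hfan := ipM_conjDiag_le_ipV_eigval U hxy Z
  rw [map_add, map_smul, isInnerProduct_ipM.add_left, isInnerProduct_ipM.smul_left,
    isInnerProduct_ipV.add_left, isInnerProduct_ipV.smul_left] at hfan
  linarith [nrm_sub_conjDiag_sq U x Z, sq_nonneg (nrm ipV (eigval Z.1 - x))]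

lemma abs_apply_le_nrm_ipV (a : Fin n → ℝ) (i : Fin n) : |a i| ≤ nrm ipV a :=
  Real.abs_le_sqrt <| (sq (a i)).trans_le <|
    Finset.single_le_sum (f := fun j => a j * a j) (fun j _ => mul_self_nonneg (a j))
      (Finset.mem_univ i)

lemma tendsto_eigval_nhds_conjDiag (U : orthogonalGroup (Fin n) ℝ) {x : Fin n → ℝ}
    (hx : Antitone x) : Tendsto (fun Z : Sym n => eigval Z.1) (𝓝 (conjDiag U x)) (𝓝 x) := by
  refine tendsto_pi_nhds.2 fun i => tendsto_iff_dist_tendsto_zero.2 ?_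
  refine squeeze_zero (fun _ => dist_nonneg) (fun Z => ?_)
    (isInnerProduct_ipM.tendsto_nrm_sub (conjDiag U x))
  rw [Real.dist_eq]
  exact (abs_apply_le_nrm_ipV (eigval Z.1 - x) i).trans (nrm_eigval_sub_le U hx Z)

end EigenvalueInequalities

section SpectralRegularSubgradients

variable {n : ℕ} {θ : (Fin n → ℝ) → EReal} {x y : Fin n → ℝ}

lemma RegSubgrad.comp_perm (hθ : SymmetricFn θ) (σ : Equiv.Perm (Fin n))
    (h : RegSubgrad ipV θ x y) : RegSubgrad ipV θ (x ∘ σ) (y ∘ σ) := by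
  let L := LinearMap.toContinuousLinearMap (LinearMap.funLeft ℝ ℝ σ.symm)
  have hLσ (a : Fin n → ℝ) : L (a ∘ σ) = a := funext fun i => congrArg a (σ.apply_symm_apply i)
  have hL (a b : Fin n → ℝ) : ipV (L a) (L b) = ipV a b :=
    Equiv.sum_comp σ.symm fun i => a i * b i
  have hθL : θ ∘ L = θ := funext fun a => hθ a σ.symm
  rw [← hLσ x, ← hLσ y] at h
  exact hθL ▸ h.comp_isometry isInnerProduct_ipV isInnerProduct_ipV hL

lemma RegSubgrad.conjDiag_of_antitone_lex (hθ : SymmetricFn θ)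
    (U : orthogonalGroup (Fin n) ℝ) (hxy : Antitone fun i => toLex (x i, y i))
    (h : RegSubgrad ipV θ x y) :
    RegSubgrad ipM (specFn θ) (conjDiag U x) (conjDiag U y) := by
  have hx : Antitone x := fun i j hij => (Prod.Lex.monotone_fst _ _ (hxy hij) :)
  obtain ⟨δ, hδxy, hδ⟩ := ((eventually_antitone_add_smul hxy).and self_mem_nhdsWithin).exists
  obtain ⟨hfin, hev⟩ := (regSubgrad_iff_eventually isInnerProduct_ipV).1 h
  refine (regSubgrad_iff_eventually isInnerProduct_ipM).2
    ⟨by simpa only [IsFiniteAt, specFn_conjDiag hθ] using hfin, fun ε hε => ?_⟩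
  have hnear : ∀ᶠ Z in 𝓝 (conjDiag U x), nrm ipM (Z - conjDiag U x) < ε * δ :=
    (isInnerProduct_ipM.tendsto_nrm_sub _).eventually_lt_const (mul_pos hε hδ)
  filter_upwards [hnear, (tendsto_eigval_nhds_conjDiag U hx).eventually (hev _ (half_pos hε))]
    with Z hZ hle
  rw [specFn_conjDiag hθ]
  refine le_trans (add_le_add_right (EReal.coe_le_coe_iff.2 ?_) _) hle
  rw [isInnerProduct_ipM.sub_right, isInnerProduct_ipV.sub_right, ipM_conjDiag_conjDiag_self]
  set N := nrm ipM (Z - conjDiag U x)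
  have hN : 0 ≤ N := nrm_nonneg _ _
  have hlip := mul_le_mul_of_nonneg_left (nrm_eigval_sub_le U hx Z) (half_pos hε).le
  have hgap : ipM (conjDiag U y) Z - ipV y (eigval Z.1) ≤ ε / 2 * N := by
    refine le_of_mul_le_mul_left ?_ (mul_pos two_pos hδ)
    calc 2 * δ * (ipM (conjDiag U y) Z - ipV y (eigval Z.1))
        ≤ N ^ 2 := by
          rw [mul_assoc]; exact two_mul_ipM_conjDiag_sub_ipV_eigval_le U hδxy Z
      _ ≤ ε * δ * N := by rw [sq]; exact mul_le_mul_of_nonneg_right hZ.le hN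
      _ = 2 * δ * (ε / 2 * N) := by ring
  linarith

lemma regSubgrad_conjDiag_iff (hθ : SymmetricFn θ) (U : orthogonalGroup (Fin n) ℝ) :
    RegSubgrad ipM (specFn θ) (conjDiag U x) (conjDiag U y) ↔ RegSubgrad ipV θ x y := by
  constructor
  · intro h
    have hcomp : specFn θ ∘ conjDiag U = θ := funext (specFn_conjDiag hθ U)
    exact hcomp ▸ h.comp_isometry isInnerProduct_ipV isInnerProduct_ipM
      (ipM_conjDiag_conjDiag_self U)
  · intro h
    obtain ⟨σ, hσ⟩ := exists_perm_antitone_comp fun i => toLex (x i, y i)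
    obtain ⟨W, hW⟩ := exists_conjDiag_comp_perm_eq U σ
    rw [← hW x, ← hW y]
    exact (h.comp_perm hθ σ).conjDiag_of_antitone_lex hθ W hσ

end SpectralRegularSubgradients

section Commutation

variable {n : ℕ}

lemma hasDerivAt_exp_smul_mul_mul_exp_neg_smul {𝔸 : Type*} [NormedRing 𝔸] [NormedAlgebra ℝ 𝔸]
    [CompleteSpace 𝔸] (K X : 𝔸) :
    HasDerivAt (fun t : ℝ => NormedSpace.exp (t • K) * X * NormedSpace.exp (t • -K)) ⁅K, X⁆ 0 := by
  refine (((hasDerivAt_exp_smul_const (𝕂 := ℝ) K 0).mul_const X).mul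
    (hasDerivAt_exp_smul_const (𝕂 := ℝ) (-K) 0)).congr_deriv ?_
  simp only [zero_smul, NormedSpace.exp_zero, one_mul, mul_one, mul_neg, ← sub_eq_add_neg,
    Ring.lie_def]

open scoped Matrix.Norms.Operator in
lemma exists_tendsto_inv_smul_conjDiag_sub (U : orthogonalGroup (Fin n) ℝ) (x : Fin n → ℝ)
    {K : Matrix (Fin n) (Fin n) ℝ} (hK : Kᵀ = -K) {W : Sym n}
    (hW : W.1 = ⁅K, (conjDiag U x).1⁆) :
    ∃ R : ℝ → orthogonalGroup (Fin n) ℝ,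
      Tendsto (fun t => t⁻¹ • (conjDiag (R t * U) x - conjDiag U x)) (𝓝[>] 0) (𝓝 W) := by
  have hexpT (t : ℝ) : (NormedSpace.exp (t • K))ᵀ = NormedSpace.exp (t • -K) := by
    rw [← exp_transpose, transpose_smul, hK]
  have hexp_mem (t : ℝ) : NormedSpace.exp (t • K) ∈ orthogonalGroup (Fin n) ℝ := by
    rw [mem_orthogonalGroup_iff, hexpT, smul_neg, exp_neg]
    exact mul_nonsing_inv _ ((isUnit_iff_isUnit_det _).1 (isUnit_exp _))
  refine ⟨fun t => ⟨_, hexp_mem t⟩, tendsto_subtype_rng.2 ?_⟩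
  have hcurve (t : ℝ) : (conjDiag (⟨_, hexp_mem t⟩ * U) x).1 =
      NormedSpace.exp (t • K) * (conjDiag U x).1 * NormedSpace.exp (t • -K) := by
    rw [coe_conjDiag, Submonoid.coe_mul, transpose_mul, hexpT, coe_conjDiag]
    simp only [mul_assoc]
  have hderiv : HasDerivAt (fun t => (conjDiag (⟨_, hexp_mem t⟩ * U) x).1) W.1 0 := by
    simp only [hcurve, hW]
    exact hasDerivAt_exp_smul_mul_mul_exp_neg_smul K (conjDiag U x).1
  refine hderiv.tendsto_slope_zero_right.congr fun t => ?_
  rw [zero_add, hcurve 0, zero_smul, zero_smul, NormedSpace.exp_zero, one_mul, mul_one]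
  rfl

lemma transpose_lie_coe_sym (A B : Sym n) : ⁅A.1, B.1⁆ᵀ = -⁅A.1, B.1⁆ := by
  have hA : A.1ᵀ = A.1 := A.2
  have hB : B.1ᵀ = B.1 := B.2
  rw [Ring.lie_def, transpose_sub, transpose_mul, transpose_mul, hA, hB, neg_sub]

lemma lie_lie_coe_mem_symSubmodule (A B : Sym n) : ⁅⁅A.1, B.1⁆, B.1⁆ ∈ symSubmodule n := by
  have hB : B.1ᵀ = B.1 := B.2
  change ⁅⁅A.1, B.1⁆, B.1⁆ᵀ = ⁅⁅A.1, B.1⁆, B.1⁆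
  rw [Ring.lie_def _ B.1, transpose_sub, transpose_mul, transpose_mul, hB,
    transpose_lie_coe_sym]
  noncomm_ring

lemma trace_mul_lie_lie_coe (A B : Sym n) :
    (A.1 * ⁅⁅A.1, B.1⁆, B.1⁆).trace = (⁅A.1, B.1⁆ * ⁅A.1, B.1⁆ᴴ).trace := by
  rw [conjTranspose_eq_transpose_of_trivial, transpose_lie_coe_sym]
  set K := ⁅A.1, B.1⁆ with hK
  calc (A.1 * ⁅K, B.1⁆).trace = (A.1 * K * B.1).trace - (A.1 * B.1 * K).trace := by
        rw [Ring.lie_def, mul_sub, trace_sub, mul_assoc, mul_assoc]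
    _ = (B.1 * A.1 * K).trace - (A.1 * B.1 * K).trace := by rw [trace_mul_cycle]
    _ = (K * -K).trace := by
        rw [← trace_sub, ← sub_mul, ← neg_sub, ← Ring.lie_def, ← hK, neg_mul, mul_neg]

/-- `V` pairs nonpositively with every direction tangent to the orthogonal orbit of `X`, on which
the spectral function is constant. The direction `⁅⁅V, X⁆, X⁆` pairs to `‖⁅V, X⁆‖²`. -/
lemma RegSubgrad.commute_of_specFn {θ : (Fin n → ℝ) → EReal} (hθ : SymmetricFn θ) {X V : Sym n}
    (h : RegSubgrad ipM (specFn θ) X V) : Commute X.1 V.1 := by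
  obtain ⟨U, hU⟩ := exists_eq_conjDiag_eigval X
  obtain ⟨R, hR⟩ := exists_tendsto_inv_smul_conjDiag_sub U (eigval X.1)
    (transpose_lie_coe_sym V X) (W := ⟨_, lie_lie_coe_mem_symSubmodule V X⟩) (by rw [← hU])
  rw [← hU] at hR
  have hle : ipM V ⟨_, lie_lie_coe_mem_symSubmodule V X⟩ ≤ 0 :=
    h.ip_nonpos_of_tendsto isInnerProduct_ipM hR fun t => (specFn_conjDiag hθ _ _).le
  have hlie : ⁅V.1, X.1⁆ = 0 := by
    by_contra hne
    exact (trace_mul_conjTranspose_self_pos hne).not_ge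
      ((trace_mul_lie_lie_coe V X).symm.trans_le hle)
  exact (commute_iff_lie_eq.2 hlie).symm

end Commutation

section SimultaneousDiagonalization

variable {n : ℕ}

lemma exists_orthonormalBasis_apply_eq_smul_of_commute {𝕜 F : Type*} [RCLike 𝕜]
    [NormedAddCommGroup F] [InnerProductSpace 𝕜 F] [FiniteDimensional 𝕜 F] {A B : F →ₗ[𝕜] F}
    (hA : A.IsSymmetric) (hB : B.IsSymmetric) (hAB : Commute A B) {m : ℕ}
    (hm : Module.finrank 𝕜 F = m) :
    ∃ (b : OrthonormalBasis (Fin m) 𝕜 F) (α β : Fin m → 𝕜),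
      (∀ i, A (b i) = α i • b i) ∧ ∀ i, B (b i) = β i • b i := by
  classical
  let S : 𝕜 × 𝕜 → Submodule 𝕜 F := fun μ =>
    Module.End.eigenspace A μ.2 ⊓ Module.End.eigenspace B μ.1
  have hinternal : DirectSum.IsInternal S := hA.directSum_isInternal_of_commute hB hAB
  have hinternal' : DirectSum.IsInternal fun μ : {μ // S μ ≠ ⊥} => S μ :=
    DirectSum.isInternal_ne_bot_iff.2 hinternal
  have horthogonal : OrthogonalFamily 𝕜 (fun μ : {μ // S μ ≠ ⊥} => S μ)
      fun μ => (S μ).subtypeₗᵢ :=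
    (hA.orthogonalFamily_eigenspace_inf_eigenspace hB).comp Subtype.val_injective
  have : Fintype {μ // S μ ≠ ⊥} :=
    (WellFoundedGT.finite_ne_bot_of_iSupIndep hinternal.submodule_iSupIndep).fintype
  let b := hinternal'.subordinateOrthonormalBasis hm horthogonal
  have hmem (i : Fin m) : ∃ μ, b i ∈ S μ :=
    ⟨_, hinternal'.subordinateOrthonormalBasis_subordinate hm i horthogonal⟩
  choose μ hμ using hmem
  exact ⟨b, fun i => (μ i).2, fun i => (μ i).1,
    fun i => Module.End.mem_eigenspace_iff.1 (hμ i).1,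
    fun i => Module.End.mem_eigenspace_iff.1 (hμ i).2⟩

lemma exists_eq_conjDiag_of_commute {X V : Sym n} (hXV : Commute X.1 V.1) :
    ∃ U x y, X = conjDiag U x ∧ V = conjDiag U y := by
  have hsymm (A : Sym n) : (toEuclideanLin A.1).IsSymmetric :=
    isSymmetric_toEuclideanLin_iff.2 (isHermitian_coe_sym A)
  obtain ⟨b, x, y, hx, hy⟩ := exists_orthonormalBasis_apply_eq_smul_of_commute (hsymm X)
    (hsymm V) (hXV.map (toLpLinAlgEquiv 2)) finrank_euclideanSpace_fin
  let U : orthogonalGroup (Fin n) ℝ :=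
    ⟨_, (EuclideanSpace.basisFun _ ℝ).toMatrix_orthonormalBasis_mem_unitary b⟩
  have eq_conjDiag_of_eigenbasis {A : Sym n} {a : Fin n → ℝ}
      (ha : ∀ k, toEuclideanLin A.1 (b k) = a k • b k) : A = conjDiag U a := by
    refine eq_conjDiag_of_mul_eq (Matrix.ext fun i k => ?_)
    rw [mul_diagonal, mul_comm]
    exact congrArg (fun v : EuclideanSpace ℝ (Fin n) => v i) (ha k)
  exact ⟨U, x, y, eq_conjDiag_of_eigenbasis hx, eq_conjDiag_of_eigenbasis hy⟩

lemma RegSubgrad.exists_eq_conjDiag {θ : (Fin n → ℝ) → EReal} (hθ : SymmetricFn θ) {X V : Sym n}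
    (h : RegSubgrad ipM (specFn θ) X V) :
    ∃ U x y, X = conjDiag U x ∧ V = conjDiag U y ∧ RegSubgrad ipV θ x y := by
  obtain ⟨U, x, y, rfl, rfl⟩ := exists_eq_conjDiag_of_commute (h.commute_of_specFn hθ)
  exact ⟨U, x, y, rfl, rfl, (regSubgrad_conjDiag_iff hθ U).1 h⟩

end SimultaneousDiagonalization

section Limits

variable {n : ℕ}

lemma isCompact_unitaryGroup {ι 𝕜 : Type*} [Fintype ι] [DecidableEq ι] [RCLike 𝕜] :
    IsCompact (unitaryGroup ι 𝕜 : Set (Matrix ι ι 𝕜)) := by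
  have hbox : IsCompact (Set.pi Set.univ fun _ : ι => Set.pi Set.univ fun _ : ι =>
      Metric.closedBall (0 : 𝕜) 1) :=
    isCompact_univ_pi fun _ => isCompact_univ_pi fun _ => isCompact_closedBall 0 1
  refine IsCompact.of_isClosed_subset (X := Matrix ι ι 𝕜) hbox isClosed_unitary
    fun U hU i _ j _ => ?_
  simpa using entry_norm_bound_of_unitary hU i j

lemma exists_eq_conjDiag_of_tendsto {ι : Type*} {l : Filter ι} [l.NeBot]
    {Us : ι → orthogonalGroup (Fin n) ℝ} {U : orthogonalGroup (Fin n) ℝ} {zs : ι → Fin n → ℝ}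
    {Z : Sym n} (hU : Tendsto Us l (𝓝 U))
    (hZ : Tendsto (fun i => conjDiag (Us i) (zs i)) l (𝓝 Z)) :
    ∃ z, Z = conjDiag U z ∧ Tendsto zs l (𝓝 z) := by
  have hcont : Continuous fun p : orthogonalGroup (Fin n) ℝ × Sym n =>
      (p.1.1ᵀ * p.2.1 * p.1.1).diag := by fun_prop
  obtain ⟨z, hz⟩ : ∃ z, Tendsto zs l (𝓝 z) := by
    refine ⟨(U.1ᵀ * Z.1 * U.1).diag, ?_⟩
    simpa only [Function.comp_def, diag_transpose_mul_conjDiag_mul] using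
      (hcont.tendsto (U, Z)).comp (hU.prodMk_nhds hZ)
  have hZ' := (continuous_conjDiag.tendsto (U, z)).comp (hU.prodMk_nhds hz)
  exact ⟨z, tendsto_nhds_unique hZ hZ', hz⟩

lemma exists_subseq_tendsto_of_tendsto_conjDiag {Us : ℕ → orthogonalGroup (Fin n) ℝ}
    {xs ys : ℕ → Fin n → ℝ} {X V : Sym n}
    (hX : Tendsto (fun k => conjDiag (Us k) (xs k)) atTop (𝓝 X))
    (hV : Tendsto (fun k => conjDiag (Us k) (ys k)) atTop (𝓝 V)) :
    ∃ φ : ℕ → ℕ, StrictMono φ ∧ ∃ U x y, X = conjDiag U x ∧ V = conjDiag U y ∧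
      Tendsto (xs ∘ φ) atTop (𝓝 x) ∧ Tendsto (ys ∘ φ) atTop (𝓝 y) := by
  have : FirstCountableTopology (Matrix (Fin n) (Fin n) ℝ) :=
    inferInstanceAs (FirstCountableTopology (Fin n → Fin n → ℝ))
  have : FirstCountableTopology (orthogonalGroup (Fin n) ℝ) :=
    Topology.IsInducing.subtypeVal.firstCountableTopology
  have : CompactSpace (orthogonalGroup (Fin n) ℝ) :=
    isCompact_iff_compactSpace.1 isCompact_unitaryGroup
  obtain ⟨U, φ, hφ, hU⟩ := CompactSpace.tendsto_subseq Us
  obtain ⟨x, hXx, hx⟩ := exists_eq_conjDiag_of_tendsto hU (hX.comp hφ.tendsto_atTop)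
  obtain ⟨y, hVy, hy⟩ := exists_eq_conjDiag_of_tendsto hU (hV.comp hφ.tendsto_atTop)
  exact ⟨φ, hφ, U, x, y, hXx, hVy, hx, hy⟩

variable {θ : (Fin n → ℝ) → EReal} {x y : Fin n → ℝ} {X V : Sym n}

lemma LimSubgrad.comp_perm (hθ : SymmetricFn θ) (σ : Equiv.Perm (Fin n))
    (h : LimSubgrad ipV θ x y) : LimSubgrad ipV θ (x ∘ σ) (y ∘ σ) :=
  h.map (L := (· ∘ σ)) (by fun_prop) (fun z => hθ z σ) (RegSubgrad.comp_perm hθ σ)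

lemma SubdiffContAt.of_comp_perm (hθ : SymmetricFn θ) (σ : Equiv.Perm (Fin n))
    (h : SubdiffContAt ipV θ (x ∘ σ)) : SubdiffContAt ipV θ x :=
  h.of_map (L := (· ∘ σ)) (by fun_prop) (fun z => hθ z σ) (RegSubgrad.comp_perm hθ σ)

lemma LimSubgrad.exists_eq_conjDiag (hθ : SymmetricFn θ) (h : LimSubgrad ipM (specFn θ) X V) :
    ∃ U x y, X = conjDiag U x ∧ V = conjDiag U y ∧ LimSubgrad ipV θ x y := by
  obtain ⟨Xs, Vs, hXV, hX, hV, hg⟩ := h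
  choose Us xs ys hXs hVs hreg using fun k => (hXV k).exists_eq_conjDiag hθ
  obtain rfl : Xs = fun k => conjDiag (Us k) (xs k) := funext hXs
  obtain rfl : Vs = fun k => conjDiag (Us k) (ys k) := funext hVs
  obtain ⟨φ, hφ, U, x, y, rfl, rfl, hx, hy⟩ := exists_subseq_tendsto_of_tendsto_conjDiag hX hV
  simp only [specFn_conjDiag hθ] at hg
  exact ⟨U, x, y, rfl, rfl, xs ∘ φ, ys ∘ φ, fun k => hreg (φ k), hx, hy,
    hg.comp hφ.tendsto_atTop⟩

lemma limSubgrad_conjDiag_iff (hθ : SymmetricFn θ) (U : orthogonalGroup (Fin n) ℝ) :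
    LimSubgrad ipM (specFn θ) (conjDiag U x) (conjDiag U y) ↔ LimSubgrad ipV θ x y := by
  refine ⟨fun h => ?_, fun h => h.map (conjDiag U).continuous (specFn_conjDiag hθ U)
    (regSubgrad_conjDiag_iff hθ U).2⟩
  obtain ⟨W, x', y', hx, hy, h'⟩ := h.exists_eq_conjDiag hθ
  obtain ⟨σ, hσ⟩ := exists_perm_forall_conjDiag_eq_imp U W
  rw [hσ x x' hx, hσ y y' hy]
  exact h'.comp_perm hθ σ

lemma SubdiffContAt.map_conjDiag (hθ : SymmetricFn θ) (U : orthogonalGroup (Fin n) ℝ)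
    (h : SubdiffContAt ipV θ x) : SubdiffContAt ipM (specFn θ) (conjDiag U x) := by
  intro V hV Xs Vs hXV hXs hVs
  choose Us xs ys hXs_eq hVs_eq hlim using fun k => (hXV k).exists_eq_conjDiag hθ
  obtain rfl : Xs = fun k => conjDiag (Us k) (xs k) := funext hXs_eq
  obtain rfl : Vs = fun k => conjDiag (Us k) (ys k) := funext hVs_eq
  refine tendsto_of_subseq_tendsto fun ns hns => ?_
  obtain ⟨φ, -, W, x', y', hx, rfl, hx', hy'⟩ :=
    exists_subseq_tendsto_of_tendsto_conjDiag (hXs.comp hns) (hVs.comp hns)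
  obtain ⟨σ, hσ⟩ := exists_perm_forall_conjDiag_eq_imp U W
  rw [hσ x x' hx] at h
  rw [hx] at hV ⊢
  simp only [specFn_conjDiag hθ]
  exact ⟨φ, (h.of_comp_perm hθ σ) y' ((limSubgrad_conjDiag_iff hθ W).1 hV) _ _
    (fun k => hlim (ns (φ k))) hx' hy'⟩

lemma subdiffContAt_conjDiag_iff (hθ : SymmetricFn θ) (U : orthogonalGroup (Fin n) ℝ) :
    SubdiffContAt ipM (specFn θ) (conjDiag U x) ↔ SubdiffContAt ipV θ x :=
  ⟨fun h => h.of_map (conjDiag U).continuous (specFn_conjDiag hθ U)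
    (regSubgrad_conjDiag_iff hθ U).2, SubdiffContAt.map_conjDiag hθ U⟩

end Limits

theorem subdiff_cont_spectral_general {n : ℕ} {θ : (Fin n → ℝ) → EReal} (hθ : SymmetricFn θ)
    (X : Sym n) : SubdiffContAt ipM (specFn θ) X ↔ SubdiffContAt ipV θ (eigval X.val) := by
  obtain ⟨U, hU⟩ := exists_eq_conjDiag_eigval X
  conv_lhs => rw [hU]
  exact subdiffContAt_conjDiag_iff hθ U

/-- Proposition 4.5: `g` is subdifferentially continuous at `X` iff `θ` is
subdifferentially continuous at `λ(X)`. -/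
theorem subdiff_cont_spectral {n : ℕ} (θ : (Fin n → ℝ) → EReal) (X : Sym n)
    (hsym : SymmetricFn θ)
    (hproper : (∃ x : Fin n → ℝ, θ x ≠ ⊤) ∧ ∀ x : Fin n → ℝ, θ x ≠ ⊥)
    (hlsc : LowerSemicontinuous θ)
    (hfin : IsFiniteAt θ (eigval X.val)) :
    SubdiffContAt ipM (specFn θ) X ↔ SubdiffContAt ipV θ (eigval X.val) :=
  subdiff_cont_spectral_general hsym X

end SpecPaper
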